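/- Let L be a linear map from m×m to n×n complex matrices. Then L is a quantum channel, i.e. L admits a Kraus representation L(X) = ∑_{i=1}^k A_i X A_i^* with ∑_{i=1}^k A_i^* A_i = I_m, if and only if the Choi matrix Z(L) is positive semidefinite and tr(L(E_{ij})) = δ_{ij} for all i,j ∈ {1,…,m} (equivalently, the trace of the (i,j) block of Z(L) equals δ_{ij}). -/

import Mathlib

open Matrix
open scoped ComplexOrder

/-- The Choi matrix of a linear map `L` from `m × m` to `n × n` complex matrices:
its `((i,p),(j,q))` entry is the `(p,q)` entry of `L(E_{ij})`. -/
def choi (m n : ℕ) (L : Matrix (Fin m) (Fin m) ℂ →ₗ[ℂ] Matrix (Fin n) (Fin n) ℂ) :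
    Matrix (Fin m × Fin n) (Fin m × Fin n) ℂ :=
  Matrix.of fun ip jq => L (Matrix.single ip.1 jq.1 (1 : ℂ)) ip.2 jq.2

/-- `L` is a quantum channel: it admits a Kraus representation
`L(X) = ∑ Aᵢ X Aᵢ*` with `∑ Aᵢ* Aᵢ = I`. -/
def IsChannel (m n : ℕ) (L : Matrix (Fin m) (Fin m) ℂ →ₗ[ℂ] Matrix (Fin n) (Fin n) ℂ) : Prop :=
  ∃ (k : ℕ) (A : Fin k → Matrix (Fin n) (Fin m) ℂ),
    (∀ X, L X = ∑ i, A i * X * (A i)ᴴ) ∧ ∑ i, (A i)ᴴ * A i = 1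

/-- `L` is an extreme point of the convex set of quantum channels. -/
def IsExtremeChannel (m n : ℕ)
    (L : Matrix (Fin m) (Fin m) ℂ →ₗ[ℂ] Matrix (Fin n) (Fin n) ℂ) : Prop :=
  IsChannel m n L ∧
    ∀ L₁ L₂ : Matrix (Fin m) (Fin m) ℂ →ₗ[ℂ] Matrix (Fin n) (Fin n) ℂ,
      IsChannel m n L₁ → IsChannel m n L₂ → ∀ t : ℝ, 0 < t → t < 1 →
      L = (t : ℂ) • L₁ + ((1 - t : ℝ) : ℂ) • L₂ → L₁ = L ∧ L₂ = L

/-!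
The Choi matrix determines the map, and the Choi matrix of `X ↦ ∑ₗ Aₗ X Aₗ*` is
`∑ₗ vec(Aₗ) vec(Aₗ)*`. A positive semidefinite matrix is precisely a sum `∑ₗ vₗ vₗ*`, and every
vector `vₗ` is the vectorization of a unique matrix, so Kraus families of `L` correspond to such
decompositions of `Z(L)`. By cyclicity, `tr(∑ₗ Aₗ X Aₗ*) = tr((∑ₗ Aₗ* Aₗ) X)`, and the trace pairing
is nondegenerate, so `∑ₗ Aₗ* Aₗ = I` says exactly that the map preserves traces.
-/

section ChoiMatrix

variable {m n R : Type*} [DecidableEq m] [Semiring R]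

/-- The Choi matrix of a linear map between matrix algebras, as the block matrix whose `(i, j)`
block is `L(E_{ij})`. It is `choi` over any semiring and with any index types. -/
def choiMatrix (L : Matrix m m R →ₗ[R] Matrix n n R) : Matrix (m × n) (m × n) R :=
  comp m m n n R (of fun i j => L (single i j 1))

theorem choiMatrix_injective [Finite m] :
    Function.Injective (choiMatrix : (Matrix m m R →ₗ[R] Matrix n n R) → _) := by
  intro L K h
  have hblock (i j : m) : L (single i j 1) = K (single i j 1) :=
    congrFun₂ ((comp m m n n R).injective h) i j
  exact ext_linearMap R fun i j => LinearMap.ext_ring (hblock i j)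

end ChoiMatrix

section KrausMap

variable {ι m n R : Type*} [Fintype ι] [Fintype m] [CommSemiring R] [Star R]

/-- The map `X ↦ ∑ₗ Aₗ X Aₗ*` with Kraus operators `A`, as a linear map. Over `ℂ` these are the
completely positive maps. -/
def krausMap (A : ι → Matrix n m R) : Matrix m m R →ₗ[R] Matrix n n R :=
  ∑ l, mulRightLinearMap n R (A l)ᴴ ∘ₗ mulLeftLinearMap m R (A l)

theorem krausMap_apply (A : ι → Matrix n m R) (X : Matrix m m R) :
    krausMap A X = ∑ l, A l * X * (A l)ᴴ := by
  simp [krausMap]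

theorem choiMatrix_krausMap [DecidableEq m] (A : ι → Matrix n m R) :
    choiMatrix (krausMap A) = ∑ l, vecMulVec (vec (A l)) (star (vec (A l))) := by
  have hblock (l : ι) (i j : m) :
      A l * single i j (1 : R) * (A l)ᴴ = vecMulVec ((A l).col i) (star ((A l).col j)) := by
    rw [single_eq_single_vecMulVec_single, mul_vecMulVec, vecMulVec_mul,
      mulVec_single_one, single_one_vecMul]
    rfl
  ext ⟨i, p⟩ ⟨j, q⟩
  simp [choiMatrix, krausMap_apply, hblock, Matrix.sum_apply, vecMulVec_apply]

theorem trace_krausMap [Fintype n] (A : ι → Matrix n m R) (X : Matrix m m R) :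
    (krausMap A X).trace = ((∑ l, (A l)ᴴ * A l) * X).trace := by
  simp only [krausMap_apply, trace_sum, Matrix.sum_mul]
  exact Finset.sum_congr rfl fun l _ => trace_mul_cycle (A l) X (A l)ᴴ

theorem trace_krausMap_eq_trace_iff [Fintype n] [DecidableEq m] (A : ι → Matrix n m R) :
    (∀ X, (krausMap A X).trace = X.trace) ↔ ∑ l, (A l)ᴴ * A l = 1 := by
  simp only [trace_krausMap, ext_iff_trace_mul_right, Matrix.one_mul]

end KrausMap

theorem trace_map_eq_trace_iff_single {m n R : Type*} [Fintype m] [Fintype n] [DecidableEq m]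
    [Semiring R] (L : Matrix m m R →ₗ[R] Matrix n n R) :
    (∀ X, (L X).trace = X.trace) ↔
      ∀ i j, (L (single i j 1)).trace = if i = j then 1 else 0 := by
  have htr (i j : m) : (single i j (1 : R)).trace = if i = j then 1 else 0 := by
    split_ifs with hij
    · rw [hij, trace_single_eq_same]
    · exact trace_single_eq_of_ne i j 1 hij
  refine ⟨fun h i j => (h _).trans (htr i j), fun h => ?_⟩
  suffices traceLinearMap n R R ∘ₗ L = traceLinearMap m R R from
    LinearMap.congr_fun this
  exact ext_linearMap R fun i j => LinearMap.ext_ring ((h i j).trans (htr i j).symm)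

theorem posSemidef_choiMatrix_iff_exists_eq_krausMap {𝕜 m n : Type*} [RCLike 𝕜] [Fintype m]
    [Finite n] [DecidableEq m] (L : Matrix m m 𝕜 →ₗ[𝕜] Matrix n n 𝕜) :
    (choiMatrix L).PosSemidef ↔ ∃ (k : ℕ) (A : Fin k → Matrix n m 𝕜), L = krausMap A := by
  rw [posSemidef_iff_eq_sum_vecMulVec]
  refine exists_congr fun k => ?_
  rw [(vec_bijective.surjective.comp_left (α := Fin k)).exists]
  simp only [← choiMatrix_injective.eq_iff, choiMatrix_krausMap, Function.comp_apply]

theorem stmt4_general {𝕜 m n : Type*} [RCLike 𝕜] [Fintype m] [Fintype n] [DecidableEq m]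
    (L : Matrix m m 𝕜 →ₗ[𝕜] Matrix n n 𝕜) :
    (∃ (k : ℕ) (A : Fin k → Matrix n m 𝕜),
        (∀ X, L X = ∑ i, A i * X * (A i)ᴴ) ∧ ∑ i, (A i)ᴴ * A i = 1) ↔
      (choiMatrix L).PosSemidef ∧
        ∀ i j, (L (single i j 1)).trace = if i = j then 1 else 0 := by
  simp only [← krausMap_apply, ← LinearMap.ext_iff, ← trace_map_eq_trace_iff_single,
    posSemidef_choiMatrix_iff_exists_eq_krausMap]
  constructor
  · rintro ⟨k, A, rfl, hA⟩
    exact ⟨⟨k, A, rfl⟩, (trace_krausMap_eq_trace_iff A).mpr hA⟩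
  · rintro ⟨⟨k, A, rfl⟩, htr⟩
    exact ⟨k, A, rfl, (trace_krausMap_eq_trace_iff A).mp htr⟩

/-- `L` is a quantum channel iff `Z(L)` is positive semidefinite and the trace of
each block `L(E_{ij})` equals `δ_{ij}`. -/
theorem stmt4 (m n : ℕ) (L : Matrix (Fin m) (Fin m) ℂ →ₗ[ℂ] Matrix (Fin n) (Fin n) ℂ) :
    IsChannel m n L ↔
      ((choi m n L).PosSemidef ∧
        ∀ i j : Fin m,
          Matrix.trace (L (Matrix.single i j (1 : ℂ))) =
            if i = j then 1 else 0) :=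
  stmt4_general L
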